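/- arXiv:1805.11173 — 3 statements merged into one kernel-verified Lean document; each statement's English description precedes it below -/
import Mathlib

section
/- Let C₀(Q) ⊆ A be a central non-degenerate inclusion with A a separable C*-algebra, and let E : A → C₀(Q) be an essentially faithful conditional expectation. Then the set Q^E_{r-cont} = {q ∈ Q : p^unif_q(a) = p^E_q(a) for all a ∈ A} is a dense Gδ subset of Q. -/
open scoped ComplexOrder
open ZeroAtInfty

/-- The seminorm `p^E_q` from the GNS representation of the state `ev_q ∘ E`:
`p^E_q(a)² = sup { (ev_q∘E)(x* a* a x) / (ev_q∘E)(x* x) : (ev_q∘E)(x* x) > 0 }`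
(with value `0` when the set is empty). -/
noncomputable def pE {Q : Type*} [TopologicalSpace Q]
    {A : Type*} [NonUnitalCStarAlgebra A]
    (E : A →L[ℂ] C₀(Q, ℂ)) (q : Q) (a : A) : ℝ :=
  Real.sqrt (sSup {r : ℝ | ∃ x : A, 0 < (E (star x * x) q).re ∧
    r = (E (star x * (star a * a) * x) q).re / (E (star x * x) q).re})

/-- `p^unif_q(a) = inf {‖f a‖ : f ∈ C₀(Q), 0 ≤ f ≤ 1, f q = 1}`, the quotient seminorm of
`A / J^unif_q`. -/
noncomputable def punif {Q : Type*} [TopologicalSpace Q] [LocallyCompactSpace Q] [T2Space Q]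
    {A : Type*} [NonUnitalCStarAlgebra A]
    (ι : C₀(Q, ℂ) →⋆ₙₐ[ℂ] A) (q : Q) (a : A) : ℝ :=
  sInf {r : ℝ | ∃ f : C₀(Q, ℂ), (∀ x : Q, 0 ≤ f x ∧ f x ≤ 1) ∧ f q = 1 ∧ r = ‖ι f * a‖}

section helpers

set_option linter.unusedSectionVars false

variable {Q : Type*} [TopologicalSpace Q] {A : Type*} [NonUnitalCStarAlgebra A]

/-- Real part of `ev_q ∘ E`. -/
noncomputable def phiE (E : A →L[ℂ] C₀(Q, ℂ)) (q : Q) : A →ₗ[ℝ] ℝ where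
  toFun a := (E a q).re
  map_add' a b := by simp
  map_smul' r a := by
    rw [← Complex.coe_smul r a, map_smul]
    simp

theorem phiE_apply (E : A →L[ℂ] C₀(Q, ℂ)) (q : Q) (a : A) : phiE E q a = (E a q).re := rfl

theorem phiE_continuous (E : A →L[ℂ] C₀(Q, ℂ)) (a : A) : Continuous fun q => phiE E q a :=
  Complex.continuous_re.comp (E a).continuous

variable [PartialOrder A] [StarOrderedRing A]

theorem phiE_mono (E : A →L[ℂ] C₀(Q, ℂ)) (hEpos : ∀ a : A, 0 ≤ a → ∀ q : Q, 0 ≤ E a q)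
    (q : Q) {a b : A} (h : a ≤ b) : phiE E q a ≤ phiE E q b := by
  have h1 := (Complex.le_def.1 (hEpos (b - a) (sub_nonneg.2 h) q)).1
  have h2 : phiE E q (b - a) = phiE E q b - phiE E q a := map_sub _ _ _
  rw [phiE_apply] at h2
  simp only [Complex.zero_re] at h1
  linarith

theorem phiE_nonneg (E : A →L[ℂ] C₀(Q, ℂ)) (hEpos : ∀ a : A, 0 ≤ a → ∀ q : Q, 0 ≤ E a q)
    (q : Q) (x : A) : 0 ≤ phiE E q (star x * x) := by
  simpa using phiE_mono E hEpos q (star_mul_self_nonneg x)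

theorem phiE_conj_le (E : A →L[ℂ] C₀(Q, ℂ)) (hEpos : ∀ a : A, 0 ≤ a → ∀ q : Q, 0 ≤ E a q)
    (q : Q) (a x : A) :
    phiE E q (star x * (star a * a) * x) ≤ ‖a‖ ^ 2 * phiE E q (star x * x) := by
  have h : star x * (star a * a) * x ≤ ‖star a * a‖ • (star x * x) :=
    CStarAlgebra.star_left_conjugate_le_norm_smul (IsSelfAdjoint.star_mul_self a)
  have := phiE_mono E hEpos q h
  rw [map_smul, CStarRing.norm_star_mul_self, smul_eq_mul] at this
  rw [sq]; exact this

/-- upper bound criterion for `pE` -/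
theorem pE_le (E : A →L[ℂ] C₀(Q, ℂ)) (q : Q) (a : A) (M : ℝ) (hM : 0 ≤ M)
    (h : ∀ x, phiE E q (star x * (star a * a) * x) ≤ M ^ 2 * phiE E q (star x * x)) :
    pE E q a ≤ M := by
  unfold pE
  rw [Real.sqrt_le_left hM]
  apply Real.sSup_le _ (sq_nonneg M)
  rintro r ⟨x, hx, rfl⟩
  rw [div_le_iff₀ hx]
  exact h x

theorem pE_nonneg (E : A →L[ℂ] C₀(Q, ℂ)) (q : Q) (a : A) : 0 ≤ pE E q a := Real.sqrt_nonneg _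

theorem pE_bdd (E : A →L[ℂ] C₀(Q, ℂ)) (hEpos : ∀ a : A, 0 ≤ a → ∀ q : Q, 0 ≤ E a q)
    (q : Q) (a : A) : BddAbove {r : ℝ | ∃ x : A, 0 < (E (star x * x) q).re ∧
    r = (E (star x * (star a * a) * x) q).re / (E (star x * x) q).re} := by
  refine ⟨‖a‖ ^ 2, ?_⟩
  rintro r ⟨x, hx, rfl⟩
  rw [div_le_iff₀ hx]
  exact phiE_conj_le E hEpos q a x

theorem le_pE (E : A →L[ℂ] C₀(Q, ℂ)) (hEpos : ∀ a : A, 0 ≤ a → ∀ q : Q, 0 ≤ E a q)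
    (q : Q) (a x : A) :
    phiE E q (star x * (star a * a) * x) ≤ pE E q a ^ 2 * phiE E q (star x * x) := by
  rcases (phiE_nonneg E hEpos q x).eq_or_lt with h | h
  · have := phiE_conj_le E hEpos q a x
    rw [← h] at this ⊢
    simpa using this
  · rw [← div_le_iff₀ h]
    have h1 := le_csSup (pE_bdd E hEpos q a) ⟨x, h, rfl⟩
    have h2 : 0 ≤ phiE E q (star x * (star a * a) * x) / phiE E q (star x * x) := by
      apply div_nonneg _ h.le
      have := phiE_nonneg E hEpos q (a * x)
      simpa [mul_assoc] using this
    unfold pE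
    rw [Real.sq_sqrt (h2.trans h1)]
    exact h1

theorem pE_lsc (E : A →L[ℂ] C₀(Q, ℂ)) (hEpos : ∀ a : A, 0 ≤ a → ∀ q : Q, 0 ≤ E a q)
    (q : Q) (a : A) (t : ℝ) (ht : t < pE E q a) : ∀ᶠ q' in nhds q, t < pE E q' a := by
  rcases lt_or_ge t 0 with h0 | h0
  · exact Filter.Eventually.of_forall fun q' => h0.trans_le (pE_nonneg E q' a)
  · unfold pE at ht
    rw [Real.lt_sqrt h0] at ht
    have hne : {r : ℝ | ∃ x : A, 0 < (E (star x * x) q).re ∧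
        r = (E (star x * (star a * a) * x) q).re / (E (star x * x) q).re}.Nonempty := by
      by_contra hne
      rw [Set.not_nonempty_iff_eq_empty] at hne
      rw [hne, Real.sSup_empty] at ht
      nlinarith
    obtain ⟨r, ⟨x, hx, rfl⟩, hr⟩ := exists_lt_of_lt_csSup hne ht
    rw [lt_div_iff₀ hx] at hr
    have c1 := phiE_continuous E (star x * x)
    have c2 := phiE_continuous E (star x * (star a * a) * x)
    have e1 := (isOpen_lt continuous_const c1).mem_nhds hx
    have e2 := (isOpen_lt (c1.const_mul (t ^ 2) ) c2).mem_nhds hr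
    filter_upwards [e1, e2] with q' h1 h2
    replace h1 : 0 < phiE E q' (star x * x) := h1
    replace h2 : t ^ 2 * phiE E q' (star x * x) < phiE E q' (star x * (star a * a) * x) := h2
    have h3 := le_pE E hEpos q' a x
    have h4 := lt_of_mul_lt_mul_right (h2.trans_le h3) h1.le
    exact lt_of_pow_lt_pow_left₀ 2 (pE_nonneg _ _ _) h4

/-- approximate continuity of `pE` in `a` -/
theorem pE_approx (E : A →L[ℂ] C₀(Q, ℂ)) (hEpos : ∀ a : A, 0 ≤ a → ∀ q : Q, 0 ≤ E a q)
    (q : Q) (a b : A) : pE E q b ≤ pE E q a + ‖b - a‖ := by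
  apply le_of_forall_pos_le_add
  intro ε hε
  set u := pE E q a with hu
  set v := ‖b - a‖ with hv
  have hu0 : 0 ≤ u := pE_nonneg _ _ _
  have hv0 : 0 ≤ v := norm_nonneg _
  apply pE_le E q b _ (by positivity)
  intro x
  set α := u + ε / 2 with hα
  set β := v + ε / 2 with hβ
  have hα0 : 0 < α := by positivity
  have hβ0 : 0 < β := by positivity
  have h1 := le_pE E hEpos q a x
  have h2 := phiE_conj_le E hEpos q (b - a) x
  have h3 := phiE_nonneg E hEpos q x
  have h4 := phiE_nonneg E hEpos q (β • (a * x) - α • ((b - a) * x))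
  rw [← hu] at h1
  rw [← hv] at h2
  set p := phiE E q (star x * x)
  have h5 : star (β • (a * x) - α • ((b - a) * x)) * (β • (a * x) - α • ((b - a) * x))
      = (β ^ 2 + α * β) • (star x * (star a * a) * x)
        + (α ^ 2 + α * β) • (star x * (star (b - a) * (b - a)) * x)
        - (α * β) • (star x * (star b * b) * x) := by
    obtain ⟨d, rfl⟩ : ∃ d, b = a + d := ⟨b - a, by abel⟩
    simp only [add_sub_cancel_left, star_sub, star_smul, star_mul, star_add, sub_mul, mul_sub,
      smul_mul_assoc, mul_smul_comm, add_mul, mul_add, star_trivial, mul_assoc]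
    module
  rw [h5, map_sub, map_add, map_smul, map_smul, map_smul] at h4
  simp only [smul_eq_mul] at h4
  set X := phiE E q (star x * (star a * a) * x)
  set Y := phiE E q (star x * (star (b - a) * (b - a)) * x)
  set Z := phiE E q (star x * (star b * b) * x)
  have hX : X ≤ α ^ 2 * p := h1.trans (by gcongr; linarith)
  have hY : Y ≤ β ^ 2 * p := h2.trans (by gcongr; linarith)
  have e : u + v + ε = α + β := by rw [hα, hβ]; ring
  rw [e]
  have h6 : (α * β) * Z ≤ (α * β) * ((α + β) ^ 2 * p) := by
    have i1 : (β ^ 2 + α * β) * X ≤ (β ^ 2 + α * β) * (α ^ 2 * p) := by gcongr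
    have i2 : (α ^ 2 + α * β) * Y ≤ (α ^ 2 + α * β) * (β ^ 2 * p) := by gcongr
    nlinarith
  exact le_of_mul_le_mul_left h6 (by positivity)

theorem exists_bump [LocallyCompactSpace Q] [T2Space Q] (q : Q) (U : Set Q) (hU : U ∈ nhds q) :
    ∃ k : C(Q, ℝ), (∀ᶠ x in nhds q, k x = 1) ∧ (∀ x, x ∉ U → k x = 0) ∧ HasCompactSupport k ∧
      ∀ x, k x ∈ Set.Icc (0 : ℝ) 1 := by
  obtain ⟨K, hK, hKU, hKc⟩ := local_compact_nhds (x := q) (interior_mem_nhds.2 hU)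
  obtain ⟨f, h1, h2, h3, h4⟩ := exists_continuous_one_zero_of_isCompact hKc
    (isOpen_interior (s := U)).isClosed_compl
    (Set.disjoint_left.2 fun x hx hx' => hx' (hKU hx))
  refine ⟨f, ?_, ?_, h3, h4⟩
  · filter_upwards [hK] with x hx using h1 hx
  · intro x hx
    exact h2 (fun h => hx (interior_subset h))

/-- A real continuous function with compact support as an element of `C₀(Q, ℂ)` -/
noncomputable def toC0 (k : C(Q, ℝ)) (hk : HasCompactSupport k) : C₀(Q, ℂ) where
  toFun x := (k x : ℂ)
  continuous_toFun := Complex.continuous_ofReal.comp k.continuous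
  zero_at_infty' := by
    have : HasCompactSupport (fun x => (k x : ℂ)) := hk.comp_left (g := Complex.ofReal) (by simp)
    exact this.is_zero_at_infty

theorem toC0_apply (k : C(Q, ℝ)) (hk : HasCompactSupport k) (x : Q) :
    toC0 k hk x = (k x : ℂ) := rfl

theorem iota_norm_le (ι : C₀(Q, ℂ) →⋆ₙₐ[ℂ] A) (hisom : Isometry ι) (f : C₀(Q, ℂ)) (c : ℝ)
    (hc : 0 ≤ c) (h : ∀ x, ‖f x‖ ≤ c) : ‖ι f‖ ≤ c := by
  rw [hisom.norm_map_of_map_zero (map_zero ι)]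
  rw [← ZeroAtInftyContinuousMap.norm_toBCF_eq_norm]
  exact (BoundedContinuousFunction.norm_le hc).2 h

theorem punif_bdd [LocallyCompactSpace Q] [T2Space Q] (ι : C₀(Q, ℂ) →⋆ₙₐ[ℂ] A) (q : Q) (a : A) :
    BddBelow {r : ℝ | ∃ f : C₀(Q, ℂ), (∀ x : Q, 0 ≤ f x ∧ f x ≤ 1) ∧ f q = 1 ∧ r = ‖ι f * a‖} := by
  refine ⟨0, ?_⟩
  rintro r ⟨f, -, -, rfl⟩
  exact norm_nonneg _

theorem punif_nonneg [LocallyCompactSpace Q] [T2Space Q] (ι : C₀(Q, ℂ) →⋆ₙₐ[ℂ] A) (q : Q) (a : A) :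
    0 ≤ punif ι q a := by
  apply Real.sInf_nonneg
  rintro r ⟨f, -, -, rfl⟩
  exact norm_nonneg _

theorem punif_le [LocallyCompactSpace Q] [T2Space Q] (ι : C₀(Q, ℂ) →⋆ₙₐ[ℂ] A) (q : Q) (a : A)
    (k : C(Q, ℝ)) (hk : HasCompactSupport k) (h : ∀ x, k x ∈ Set.Icc (0 : ℝ) 1) (hq : k q = 1) :
    punif ι q a ≤ ‖ι (toC0 k hk) * a‖ := by
  apply csInf_le (punif_bdd ι q a)
  refine ⟨toC0 k hk, fun x => ?_, ?_, rfl⟩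
  · rw [toC0_apply]
    exact ⟨by exact_mod_cast (h x).1, by exact_mod_cast (h x).2⟩
  · rw [toC0_apply, hq]; simp

theorem punif_nonempty [LocallyCompactSpace Q] [T2Space Q] (ι : C₀(Q, ℂ) →⋆ₙₐ[ℂ] A) (q : Q)
    (a : A) : {r : ℝ | ∃ f : C₀(Q, ℂ), (∀ x : Q, 0 ≤ f x ∧ f x ≤ 1) ∧ f q = 1 ∧
      r = ‖ι f * a‖}.Nonempty := by
  obtain ⟨k, h1, -, h3, h4⟩ := exists_bump q Set.univ Filter.univ_mem
  refine ⟨_, toC0 k h3, fun x => ?_, ?_, rfl⟩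
  · rw [toC0_apply]
    exact ⟨by exact_mod_cast (h4 x).1, by exact_mod_cast (h4 x).2⟩
  · rw [toC0_apply, h1.self_of_nhds]; simp

theorem punif_approx [LocallyCompactSpace Q] [T2Space Q] (ι : C₀(Q, ℂ) →⋆ₙₐ[ℂ] A)
    (hisom : Isometry ι) (q : Q) (a b : A) : punif ι q b ≤ punif ι q a + ‖b - a‖ := by
  rw [← sub_le_iff_le_add]
  apply le_csInf (punif_nonempty ι q a)
  rintro r ⟨f, hf, hfq, rfl⟩
  rw [sub_le_iff_le_add]
  have h1 : punif ι q b ≤ ‖ι f * b‖ := csInf_le (punif_bdd ι q b) ⟨f, hf, hfq, rfl⟩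
  refine h1.trans ?_
  have h2 : ι f * b = ι f * a + ι f * (b - a) := by rw [mul_sub]; abel
  rw [h2]
  refine (norm_add_le _ _).trans ?_
  gcongr
  refine (norm_mul_le _ _).trans ?_
  have h3 : ‖ι f‖ ≤ 1 := iota_norm_le ι hisom f 1 zero_le_one fun x => by
    have := CStarAlgebra.norm_le_norm_of_nonneg_of_le (hf x).1 (hf x).2
    simpa using this
  exact mul_le_of_le_one_left (norm_nonneg _) h3

theorem punif_usc [LocallyCompactSpace Q] [T2Space Q] (ι : C₀(Q, ℂ) →⋆ₙₐ[ℂ] A)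
    (hisom : Isometry ι) (q : Q) (a : A) (t : ℝ) (ht : punif ι q a < t) :
    ∀ᶠ q' in nhds q, punif ι q' a < t := by
  obtain ⟨r, ⟨f, hf, hfq, rfl⟩, hr⟩ := exists_lt_of_csInf_lt (punif_nonempty ι q a) ht
  obtain ⟨s, hs0, hs1, hs⟩ : ∃ s : ℝ, 0 < s ∧ s < 1 ∧ s⁻¹ * ‖ι f * a‖ < t := by
    have c : Filter.Tendsto (fun s : ℝ => s⁻¹ * ‖ι f * a‖) (nhdsWithin 1 (Set.Iio 1))
        (nhds ((1 : ℝ)⁻¹ * ‖ι f * a‖)) :=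
      ((tendsto_inv₀ one_ne_zero).mul_const _).mono_left nhdsWithin_le_nhds
    have e1 := c.eventually (gt_mem_nhds (by simpa using hr : (1 : ℝ)⁻¹ * ‖ι f * a‖ < t))
    have e2 : ∀ᶠ s : ℝ in nhdsWithin 1 (Set.Iio 1), s < 1 := self_mem_nhdsWithin
    have e3 : ∀ᶠ s : ℝ in nhdsWithin 1 (Set.Iio 1), 0 < s :=
      nhdsWithin_le_nhds (lt_mem_nhds zero_lt_one)
    obtain ⟨s, h1, h2, h3⟩ := (e1.and (e2.and e3)).exists
    exact ⟨s, h3, h2, h1⟩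
  have cf : Continuous fun x => (f x).re := Complex.continuous_re.comp f.continuous
  have fre : ∀ x, f x = ((f x).re : ℂ) := fun x =>
    Complex.ext (by simp) (by simpa using (Complex.le_def.1 (hf x).1).2.symm)
  have f0 : ∀ x, 0 ≤ (f x).re := fun x => by simpa using (Complex.le_def.1 (hf x).1).1
  obtain ⟨k, h1, -, h3, h4⟩ := exists_bump q Set.univ Filter.univ_mem
  have hmax : ∀ x, 0 < max (f x).re s := fun x => lt_max_of_lt_right hs0
  let g : C(Q, ℝ) := ⟨fun x => k x / max (f x).re s,
    k.continuous.div (cf.max continuous_const) fun x => (hmax x).ne'⟩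
  have hg : HasCompactSupport g := by
    apply h3.mono
    intro x hx hx'
    apply hx
    simp [g, hx']
  let k' : C(Q, ℝ) := ⟨fun x => g x * (f x).re, g.continuous.mul cf⟩
  have hk' : HasCompactSupport k' := hg.mul_right
  have hk01 : ∀ x, k' x ∈ Set.Icc (0 : ℝ) 1 := by
    intro x
    have h5 : k' x = k x * ((f x).re / max (f x).re s) := by
      simp only [k', g, ContinuousMap.coe_mk]; ring
    have h6 : (f x).re / max (f x).re s ≤ 1 := (div_le_one (hmax x)).2 (le_max_left _ _)
    have h7 : 0 ≤ (f x).re / max (f x).re s := div_nonneg (f0 x) (hmax x).le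
    rw [h5]
    exact ⟨mul_nonneg (h4 x).1 h7, mul_le_one₀ (h4 x).2 h7 h6⟩
  have hmul : toC0 k' hk' = toC0 g hg * f := by
    ext x
    rw [ZeroAtInftyContinuousMap.mul_apply, toC0_apply, toC0_apply, fre x]
    simp [k']
  have hn : ‖ι (toC0 k' hk') * a‖ < t := by
    refine lt_of_le_of_lt ?_ hs
    rw [hmul, map_mul, mul_assoc]
    refine (norm_mul_le _ _).trans ?_
    gcongr
    apply iota_norm_le ι hisom _ _ (by positivity)
    intro x
    rw [toC0_apply]
    simp only [g, ContinuousMap.coe_mk, Complex.norm_real, Real.norm_eq_abs]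
    rw [abs_of_nonneg (div_nonneg (h4 x).1 (hmax x).le), div_eq_mul_inv]
    refine (mul_le_of_le_one_left (by have := hmax x; positivity) (h4 x).2).trans ?_
    exact inv_anti₀ hs0 (le_max_right _ _)
  have e5 : ∀ᶠ q' in nhds q, s < (f q').re :=
    (isOpen_lt continuous_const cf).mem_nhds (by simpa [hfq] using hs1)
  filter_upwards [h1, e5] with q' i1 i2
  refine (punif_le ι q' a k' hk' hk01 ?_).trans_lt hn
  simp only [k', g, ContinuousMap.coe_mk, i1, max_eq_left i2.le]
  field_simp [(hs0.trans i2).ne']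

/-- scaling by a central function -/
theorem phiE_scale (ι : C₀(Q, ℂ) →⋆ₙₐ[ℂ] A)
    (hcentral : ∀ (f : C₀(Q, ℂ)) (a : A), ι f * a = a * ι f)
    (E : A →L[ℂ] C₀(Q, ℂ))
    (hEmod : ∀ (f₁ f₂ : C₀(Q, ℂ)) (a : A), E (ι f₁ * a * ι f₂) = f₁ * E a * f₂)
    (q : Q) (f : C₀(Q, ℂ)) (a x : A) :
    phiE E q (star x * (star (ι f * a) * (ι f * a)) * x)
      = ‖f q‖ ^ 2 * phiE E q (star x * (star a * a) * x) := by
  have h : star x * (star (ι f * a) * (ι f * a)) * x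
      = ι (star f) * (star x * (star a * a) * x) * ι f := by
    rw [star_mul, ← map_star, ← hcentral (star f) (star a), hcentral f a]
    simp only [mul_assoc]
    rw [hcentral f x]
    simp only [← mul_assoc]
    rw [hcentral (star f) (star x)]
  rw [h, phiE_apply, hEmod, phiE_apply]
  simp only [ZeroAtInftyContinuousMap.mul_apply, ZeroAtInftyContinuousMap.star_apply]
  have h2 : star (f q) * (E (star x * (star a * a) * x)) q * f q
      = ((‖f q‖ ^ 2 : ℝ) : ℂ) * (E (star x * (star a * a) * x)) q := by
    have h3 : star (f q) * f q = ((‖f q‖ ^ 2 : ℝ) : ℂ) := by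
      have := RCLike.conj_mul (f q)
      simpa using this
    rw [← h3]; ring
  rw [h2, Complex.re_ofReal_mul]

theorem pE_le_punif [LocallyCompactSpace Q] [T2Space Q] (ι : C₀(Q, ℂ) →⋆ₙₐ[ℂ] A)
    (hcentral : ∀ (f : C₀(Q, ℂ)) (a : A), ι f * a = a * ι f)
    (E : A →L[ℂ] C₀(Q, ℂ))
    (hEmod : ∀ (f₁ f₂ : C₀(Q, ℂ)) (a : A), E (ι f₁ * a * ι f₂) = f₁ * E a * f₂)
    (hEpos : ∀ a : A, 0 ≤ a → ∀ q : Q, 0 ≤ E a q) (q : Q) (a : A) :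
    pE E q a ≤ punif ι q a := by
  apply le_csInf (punif_nonempty ι q a)
  rintro r ⟨f, hf, hfq, rfl⟩
  apply pE_le E q a _ (norm_nonneg _)
  intro x
  have := phiE_conj_le E hEpos q (ι f * a) x
  rw [phiE_scale ι hcentral E hEmod, hfq] at this
  simpa using this

/-- essential faithfulness gives norm bounds -/
theorem norm_le_of_phiE [LocallyCompactSpace Q] [T2Space Q] (ι : C₀(Q, ℂ) →⋆ₙₐ[ℂ] A)
    (E : A →L[ℂ] C₀(Q, ℂ))
    (hEmod : ∀ (f₁ f₂ : C₀(Q, ℂ)) (a : A), E (ι f₁ * a * ι f₂) = f₁ * E a * f₂)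
    (hEpos : ∀ a : A, 0 ≤ a → ∀ q : Q, 0 ≤ E a q)
    (hEessfaithful : ∀ L : TwoSidedIdeal A, IsClosed (L : Set A) →
      (∀ x ∈ L, E x = 0) → (L : Set A) = {0}) (b : A) (M : ℝ) (hM : 0 ≤ M)
    (h : ∀ q x, phiE E q (star x * (star b * b) * x) ≤ M ^ 2 * phiE E q (star x * x)) :
    ‖b‖ ≤ M := by
  set T := star b * b with hT
  have hTsa : IsSelfAdjoint T := IsSelfAdjoint.star_mul_self b
  have hT0 : 0 ≤ T := star_mul_self_nonneg b
  have hM2 : max (0 - M ^ 2) 0 = 0 := max_eq_right (by nlinarith)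
  set g := cfcₙ (fun t : ℝ => √(max (t - M ^ 2) 0)) T with hg
  set k := cfcₙ (fun t : ℝ => max (t - M ^ 2) 0) T with hk
  have hgsa : star g = g := (cfcₙ_predicate (R := ℝ) (p := IsSelfAdjoint) _ T).star_eq
  have hksa : star k = k := (cfcₙ_predicate (R := ℝ) (p := IsSelfAdjoint) _ T).star_eq
  have c1 : Continuous (fun t : ℝ => √(max (t - M ^ 2) 0)) := by fun_prop
  have c2 : Continuous (fun t : ℝ => max (t - M ^ 2) 0) := by fun_prop
  have z1 : √(max (0 - M ^ 2) 0) = 0 := by rw [hM2]; simp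
  have hkk : k * k = g * T * g - (M ^ 2) • (g * g) := by
    have hid : T = cfcₙ (fun t : ℝ => t) T := (cfcₙ_id' ℝ T).symm
    have e1 : k * k = cfcₙ (fun t : ℝ => max (t - M ^ 2) 0 * max (t - M ^ 2) 0) T :=
      (cfcₙ_mul _ _ T c2.continuousOn hM2 c2.continuousOn hM2).symm
    have e2 : g * g = cfcₙ (fun t : ℝ => √(max (t - M ^ 2) 0) * √(max (t - M ^ 2) 0)) T :=
      (cfcₙ_mul _ _ T c1.continuousOn z1 c1.continuousOn z1).symm
    have e3 : g * T = cfcₙ (fun t : ℝ => √(max (t - M ^ 2) 0) * t) T := by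
      rw [cfcₙ_mul (fun t : ℝ => √(max (t - M ^ 2) 0)) (fun t : ℝ => t) T c1.continuousOn z1
        continuousOn_id rfl, cfcₙ_id' ℝ T]
    have c3 : Continuous (fun t : ℝ => √(max (t - M ^ 2) 0) * t) := by fun_prop
    have c4 : Continuous (fun t : ℝ => √(max (t - M ^ 2) 0) * t * √(max (t - M ^ 2) 0)) := by
      fun_prop
    have c5 : Continuous (fun t : ℝ => √(max (t - M ^ 2) 0) * √(max (t - M ^ 2) 0)) := by
      fun_prop
    have z5 : √(max (0 - M ^ 2) 0) * √(max (0 - M ^ 2) 0) = 0 := by rw [z1]; simp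
    have e4 : g * T * g = cfcₙ (fun t : ℝ => √(max (t - M ^ 2) 0) * t * √(max (t - M ^ 2) 0)) T := by
      rw [e3, cfcₙ_mul (fun t : ℝ => √(max (t - M ^ 2) 0) * t)
        (fun t : ℝ => √(max (t - M ^ 2) 0)) T c3.continuousOn (by simp) c1.continuousOn z1]
    rw [e1, e2, e4,
      ← cfcₙ_smul (M ^ 2) (fun t : ℝ => √(max (t - M ^ 2) 0) * √(max (t - M ^ 2) 0)) T
        c5.continuousOn z5,
      ← cfcₙ_sub (fun t : ℝ => √(max (t - M ^ 2) 0) * t * √(max (t - M ^ 2) 0))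
        (fun t : ℝ => M ^ 2 • (√(max (t - M ^ 2) 0) * √(max (t - M ^ 2) 0))) T
        c4.continuousOn (by simp) (by fun_prop) (by rw [z5, smul_zero])]
    apply cfcₙ_congr
    intro t _
    have hs : √(max (t - M ^ 2) 0) * √(max (t - M ^ 2) 0) = max (t - M ^ 2) 0 :=
      Real.mul_self_sqrt (le_max_right _ _)
    have hs2 : max (t - M ^ 2) 0 * max (t - M ^ 2) 0 = max (t - M ^ 2) 0 * (t - M ^ 2) := by
      rcases le_total (t - M ^ 2) 0 with h | h
      · simp [max_eq_right h]
      · simp [max_eq_left h]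
    simp only [smul_eq_mul]
    rw [hs2]
    linear_combination (M ^ 2 - t) * hs
  have hz : ∀ y, E (star (k * y) * (k * y)) = 0 := by
    intro y
    ext q
    have h1 := h q (g * y)
    have h2 : star (k * y) * (k * y)
        = star (g * y) * T * (g * y) - (M ^ 2) • (star (g * y) * (g * y)) := by
      have : star (k * y) * (k * y) = star y * (k * k) * y := by
        rw [star_mul, hksa]; simp only [mul_assoc]
      rw [this, hkk, star_mul, hgsa]
      simp only [mul_sub, sub_mul, mul_smul_comm, smul_mul_assoc, mul_assoc]
    have h3 : phiE E q (star (k * y) * (k * y)) ≤ 0 := by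
      rw [h2, map_sub, map_smul, smul_eq_mul]; linarith
    have h4 := Complex.le_def.1 (hEpos _ (star_mul_self_nonneg (k * y)) q)
    apply Complex.ext
    · exact le_antisymm h3 h4.1
    · exact h4.2.symm
  have hpol : ∀ u v, E (star (k * u) * (k * v)) = 0 := by
    intro u v
    have p1 := hz (u + v)
    have p2 := hz (u + Complex.I • v)
    simp only [mul_add, star_add, add_mul, map_add, hz, zero_add, add_zero, mul_smul_comm,
      star_smul, smul_mul_assoc, map_smul, smul_zero] at p1 p2
    have hI : star Complex.I = -Complex.I := Complex.conj_I
    rw [hI] at p2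
    have p3 : (2 * Complex.I) • E (star (k * u) * (k * v)) = 0 := by
      have p4 : (2 * Complex.I) • E (star (k * u) * (k * v))
          = Complex.I • (E (star (k * v) * (k * u)) + E (star (k * u) * (k * v)))
            + (-Complex.I • E (star (k * v) * (k * u))
              + Complex.I • E (star (k * u) * (k * v))) := by module
      rw [p4]
      first
      | rw [p1, p2, smul_zero, add_zero]
      | (rw [add_comm (E (star (k * v) * (k * u))), p1, add_comm (-Complex.I • _), p2, smul_zero,
          add_zero])
    have : (2 * Complex.I) ≠ 0 := by simp
    exact (smul_eq_zero.1 p3).resolve_left this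
  let L : TwoSidedIdeal A := TwoSidedIdeal.mk' {z : A | ∀ y₁ y₂, E (y₁ * z * y₂) = 0}
    (by simp) (by
      intro x y hx hy y₁ y₂
      rw [mul_add, add_mul, map_add, hx, hy, add_zero])
    (by
      intro x hx y₁ y₂
      rw [mul_neg, neg_mul, map_neg, hx, neg_zero])
    (by
      intro x y hy y₁ y₂
      rw [← mul_assoc]; exact hy _ _)
    (by
      intro x y hx y₁ y₂
      have := hx y₁ (y * y₂)
      simpa only [mul_assoc] using this)
  have hL : (L : Set A) = {z : A | ∀ y₁ y₂, E (y₁ * z * y₂) = 0} := by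
    ext z
    simp only [L, SetLike.mem_coe, TwoSidedIdeal.mem_mk']
  have hcl : IsClosed (L : Set A) := by
    rw [hL]
    simp only [Set.ofPred_forall]
    refine isClosed_iInter fun y₁ => isClosed_iInter fun y₂ => ?_
    exact isClosed_eq (E.continuous.comp (by fun_prop)) continuous_const
  have hker : ∀ x ∈ L, E x = 0 := by
    intro x hx
    have hx' : x ∈ {z : A | ∀ y₁ y₂, E (y₁ * z * y₂) = 0} := by rw [← hL]; exact hx
    ext q
    obtain ⟨f, h1, -, h3, -⟩ := exists_bump q Set.univ Filter.univ_mem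
    have h5 := hx' (ι (toC0 f h3)) (ι (toC0 f h3))
    rw [hEmod] at h5
    have h6 := DFunLike.congr_fun h5 q
    simpa [ZeroAtInftyContinuousMap.mul_apply, toC0_apply, h1.self_of_nhds] using h6
  have hL0 := hEessfaithful L hcl hker
  have hkL : k * k ∈ (L : Set A) := by
    rw [hL]
    intro y₁ y₂
    have := hpol (star y₁) y₂
    rw [star_mul, star_star, hksa] at this
    simpa only [mul_assoc] using this
  rw [hL0] at hkL
  have hk0 : k = 0 := by
    apply (CStarRing.star_mul_self_eq_zero_iff k).1
    rw [hksa]; exact hkL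
  have heq : (quasispectrum ℝ T).EqOn (fun t : ℝ => max (t - M ^ 2) 0) (fun _ => 0) := by
    apply eqOn_of_cfcₙ_eq_cfcₙ (a := T) _ hTsa c2.continuousOn hM2 continuousOn_const rfl
    rw [← hk, hk0]
    simp
  have hTn : ‖T‖ ≤ M ^ 2 := by
    rw [← cfcₙ_id' ℝ T]
    apply norm_cfcₙ_le
    intro t ht
    have h1 := heq ht
    have h2 := quasispectrum_nonneg_of_nonneg T hT0 t ht
    simp only [] at h1
    rw [Real.norm_eq_abs, abs_of_nonneg h2]
    have := le_max_left (t - M ^ 2) 0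
    linarith
  rw [hT, CStarRing.norm_star_mul_self] at hTn
  nlinarith [norm_nonneg b]

end helpers

/-- For a central non-degenerate inclusion `C₀(Q) ⊆ A` with `A` separable
and `E : A → C₀(Q)` an essentially faithful conditional expectation, the set
`Q^E_{r-cont} = {q | p^unif_q = p^E_q on A}` is a dense `Gδ` subset of `Q`. -/
theorem stmt13 {Q : Type*} [TopologicalSpace Q] [LocallyCompactSpace Q] [T2Space Q]
    {A : Type*} [NonUnitalCStarAlgebra A] [PartialOrder A] [StarOrderedRing A]
    [TopologicalSpace.SeparableSpace A]
    (ι : C₀(Q, ℂ) →⋆ₙₐ[ℂ] A) (hisom : Isometry ι)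
    (hcentral : ∀ (f : C₀(Q, ℂ)) (a : A), ι f * a = a * ι f)
    (hnondeg : closure
      (Submodule.span ℂ {x : A | ∃ (f : C₀(Q, ℂ)) (a : A), x = ι f * a} : Set A) = Set.univ)
    (E : A →L[ℂ] C₀(Q, ℂ))
    (hEnorm : ‖E‖ = 1)
    (hEproj : ∀ f : C₀(Q, ℂ), E (ι f) = f)
    (hEmod : ∀ (f₁ f₂ : C₀(Q, ℂ)) (a : A), E (ι f₁ * a * ι f₂) = f₁ * E a * f₂)
    (hEpos : ∀ a : A, 0 ≤ a → ∀ q : Q, 0 ≤ E a q)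
    (hEessfaithful : ∀ L : TwoSidedIdeal A, IsClosed (L : Set A) →
      (∀ x ∈ L, E x = 0) → (L : Set A) = {0}) :
    Dense {q : Q | ∀ a : A, punif ι q a = pE E q a} ∧
    IsGδ {q : Q | ∀ a : A, punif ι q a = pE E q a} := by
  have hEqn : {q : Q | ∀ a : A, punif ι q a = pE E q a} =
      ⋂ i : ℕ × ℕ, {q : Q | punif ι q (TopologicalSpace.denseSeq A i.1)
        < pE E q (TopologicalSpace.denseSeq A i.1) + 1 / ((i.2 : ℝ) + 1)} := by
    ext q
    simp only [Set.mem_ofPred_eq, Set.mem_iInter]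
    constructor
    · intro h i
      rw [h]
      have : 0 < 1 / ((i.2 : ℝ) + 1) := by positivity
      linarith
    · intro h a
      refine le_antisymm ?_ (pE_le_punif ι hcentral E hEmod hEpos q a)
      apply le_of_forall_pos_le_add
      intro ε hε
      obtain ⟨n, hn⟩ := exists_nat_one_div_lt (show 0 < ε / 3 by positivity)
      obtain ⟨m, hm⟩ := (TopologicalSpace.denseRange_denseSeq A).exists_dist_lt a
        (show 0 < ε / 3 by positivity)
      have h1 := h (m, n)
      simp only at h1
      have h2 := punif_approx ι hisom q (TopologicalSpace.denseSeq A m) a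
      have h3 := pE_approx E hEpos q a (TopologicalSpace.denseSeq A m)
      rw [dist_eq_norm] at hm
      rw [norm_sub_rev] at h3
      linarith
  have hopen : ∀ (a : A) (ε : ℝ), IsOpen {q : Q | punif ι q a < pE E q a + ε} := by
    intro a ε
    rw [isOpen_iff_mem_nhds]
    intro q hq
    obtain ⟨t, ht1, ht2⟩ := exists_between (show punif ι q a < pE E q a + ε from hq)
    filter_upwards [punif_usc ι hisom q a t ht1,
      pE_lsc E hEpos q a (t - ε) (by linarith)] with q' h1 h2
    show punif ι q' a < pE E q' a + ε
    linarith
  have hdense : ∀ (a : A) (ε : ℝ), 0 < ε → Dense {q : Q | punif ι q a < pE E q a + ε} := by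
    intro a ε hε
    rw [dense_iff_inter_open]
    intro V hV hVne
    by_contra hcon
    have hall : ∀ q ∈ V, pE E q a + ε ≤ punif ι q a := by
      intro q hq
      by_contra h
      exact hcon ⟨q, hq, not_le.1 h⟩
    have hbdd : BddBelow ((fun q => punif ι q a) '' V) := by
      refine ⟨0, ?_⟩
      rintro _ ⟨q, _, rfl⟩
      exact punif_nonneg ι q a
    set c := sInf ((fun q => punif ι q a) '' V) with hc
    have hcV : ∀ q ∈ V, c ≤ punif ι q a := fun q hq => csInf_le hbdd ⟨q, hq, rfl⟩
    have hcε : ε ≤ c := by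
      apply le_csInf (hVne.image _)
      rintro _ ⟨q, hq, rfl⟩
      have := hall q hq
      have := pE_nonneg E q a
      simp only
      linarith
    obtain ⟨_, ⟨q₀, hq₀, rfl⟩, hlt⟩ := exists_lt_of_csInf_lt (hVne.image _)
      (show c < c + ε / 2 by linarith)
    have hW := punif_usc ι hisom q₀ a (c + ε / 2) hlt
    obtain ⟨k, h1, h2, h3, h4⟩ := exists_bump q₀ _ (Filter.inter_mem hW (hV.mem_nhds hq₀))
    have hnorm : ‖ι (toC0 k h3) * a‖ ≤ c - ε / 2 := by
      apply norm_le_of_phiE ι E hEmod hEpos hEessfaithful _ _ (by linarith)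
      intro q x
      rw [phiE_scale ι hcentral E hEmod, toC0_apply]
      have hp := phiE_nonneg E hEpos q x
      by_cases hq : q ∈ {x | punif ι x a < c + ε / 2} ∩ V
      · have h5 : pE E q a ≤ c - ε / 2 := by
          have := hall q hq.2
          have : punif ι q a < c + ε / 2 := hq.1
          linarith
        have h6 : ‖(k q : ℂ)‖ ^ 2 ≤ 1 := by
          rw [Complex.norm_real, Real.norm_eq_abs, abs_of_nonneg (h4 q).1]
          exact pow_le_one₀ (h4 q).1 (h4 q).2
        have h7 := le_pE E hEpos q a x
        have h8 : pE E q a ^ 2 * phiE E q (star x * x)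
            ≤ (c - ε / 2) ^ 2 * phiE E q (star x * x) := by
          have := pE_nonneg E q a
          gcongr
        have h9 : 0 ≤ phiE E q (star x * (star a * a) * x) := by
          have := phiE_nonneg E hEpos q (a * x)
          simpa [mul_assoc] using this
        exact (mul_le_of_le_one_left h9 h6).trans (h7.trans h8)
      · rw [h2 q hq]
        have : 0 ≤ (c - ε / 2) ^ 2 * phiE E q (star x * x) := by positivity
        simpa using this
    have h5 := punif_le ι q₀ a k h3 h4 h1.self_of_nhds
    have h6 := hcV q₀ hq₀
    linarith
  rw [hEqn]
  constructor
  · apply dense_iInter_of_isOpen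
    · exact fun i => hopen _ _
    · exact fun i => hdense _ _ (by positivity)
  · exact IsGδ.iInter fun i => (hopen _ _).isGδ
end

section
/- Let B ⊆ A be a non-degenerate C*-inclusion, view A inside its multiplier algebra M(A), and set M_B = {m ∈ M(A) : m b ∈ B and b m ∈ B for all b ∈ B} (the canonical copy of M(B) inside M(A)). Then: (i) N_{M(A)}(B) is a norm-closed subset of M(A) containing the unit and closed under products and adjoints, and if n ∈ N_{M(A)}(B) is invertible in M(A), then n⁻¹ ∈ N_{M(A)}(B); (ii) N_A(B) = N_{M(A)}(B) ∩ A = {b₁ n b₂ : b₁, b₂ ∈ B, n ∈ N_{M(A)}(B)} = {b₁ n b₂ : b₁, b₂ ∈ B, n ∈ N_A(B)}; (iii) {n ∈ M(A) : n m n* ∈ M_B and n* m n ∈ M_B for all m ∈ M_B} = N_{M(A)}(B); in particular, n n* ∈ M_B and n* n ∈ M_B for every n ∈ N_{M(A)}(B). -/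
open scoped MultiplierAlgebra

/-- The set of normalizers of `S`: `{n | n S n* ⊆ S and n* S n ⊆ S}`. -/
def normalizerIn {R : Type*} [Mul R] [Star R] (S : Set R) : Set R :=
  {n | ∀ s ∈ S, n * s * star n ∈ S ∧ star n * s * n ∈ S}

/-- The canonical embedding of `A` into its multiplier algebra `M(A) = 𝓜(ℂ, A)`. -/
noncomputable def kA (A : Type*) [NonUnitalCStarAlgebra A] : A →⋆ₙₐ[ℂ] 𝓜(ℂ, A) :=
  DoubleCentralizer.coeHom

/-- `N_{M(A)}(B)`: normalizers of `B` (viewed inside `M(A)`) in the multiplier algebra. -/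
def NM {A : Type*} [NonUnitalCStarAlgebra A] (Bs : Set A) : Set 𝓜(ℂ, A) :=
  normalizerIn (kA A '' Bs)

/-- `M_B = {m ∈ M(A) : m B ⊆ B and B m ⊆ B}`, the canonical copy of `M(B)` inside `M(A)`. -/
def MB {A : Type*} [NonUnitalCStarAlgebra A] (Bs : Set A) : Set 𝓜(ℂ, A) :=
  {m | ∀ b ∈ Bs, m * kA A b ∈ kA A '' Bs ∧ kA A b * m ∈ kA A '' Bs}

/-- Non-degeneracy of the inclusion `Bs ⊆ A`. -/
def NondegSet {A : Type*} [NonUnitalCStarAlgebra A] (Bs : Set A) : Prop :=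
  closure (Submodule.span ℂ {x : A | ∃ b ∈ Bs, ∃ a : A, x = b * a} : Set A) = Set.univ

section Abstract

variable {R : Type*} [CStarAlgebra R]

/-- The multipliers of `K` in `R`, as a star subalgebra. -/
def multSub (K : NonUnitalStarSubalgebra ℂ R) : StarSubalgebra ℂ R where
  carrier := {m | ∀ k ∈ K, m * k ∈ K ∧ k * m ∈ K}
  mul_mem' := by
    intro a b ha hb k hk
    refine ⟨?_, ?_⟩
    · rw [mul_assoc]; exact (ha _ (hb k hk).1).1
    · rw [← mul_assoc]; exact (hb _ (ha k hk).2).2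
  add_mem' := by
    intro a b ha hb k hk
    refine ⟨?_, ?_⟩
    · rw [add_mul]; exact add_mem (ha k hk).1 (hb k hk).1
    · rw [mul_add]; exact add_mem (ha k hk).2 (hb k hk).2
  algebraMap_mem' := by
    intro r k hk
    rw [Algebra.algebraMap_eq_smul_one]
    simp only [smul_mul_assoc, one_mul, mul_smul_comm, mul_one]
    exact ⟨K.smul_mem' r hk, K.smul_mem' r hk⟩
  star_mem' := by
    intro a ha k hk
    have := ha (star k) (star_mem hk)
    refine ⟨?_, ?_⟩
    · simpa using star_mem this.2
    · simpa using star_mem this.1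

variable (K : NonUnitalStarSubalgebra ℂ R)

lemma mem_multSub {m : R} : m ∈ multSub K ↔ ∀ k ∈ K, m * k ∈ K ∧ k * m ∈ K := Iff.rfl

lemma multSub_closed (hK : IsClosed (K : Set R)) : IsClosed (multSub K : Set R) := by
  have : (multSub K : Set R) = ⋂ k ∈ K, ((fun m => m * k) ⁻¹' (K : Set R)) ∩
      ((fun m => k * m) ⁻¹' (K : Set R)) := by
    ext m
    simp [mem_multSub]
  rw [this]
  exact isClosed_biInter fun k _ =>
    (hK.preimage (by fun_prop)).inter (hK.preimage (by fun_prop))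

lemma norm_closed (hK : IsClosed (K : Set R)) : IsClosed (normalizerIn (K : Set R)) := by
  have : normalizerIn (K : Set R) = ⋂ k ∈ K, ((fun m => m * k * star m) ⁻¹' (K : Set R)) ∩
      ((fun m => star m * k * m) ⁻¹' (K : Set R)) := by
    ext m
    simp [normalizerIn]
  rw [this]
  exact isClosed_biInter fun k _ =>
    (hK.preimage (by fun_prop)).inter (hK.preimage (by fun_prop))

lemma norm_star_mem {T : Type*} [Mul T] [InvolutiveStar T] {S : Set T} {n : T}
    (hn : n ∈ normalizerIn S) : star n ∈ normalizerIn S := by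
  intro s hs
  rw [star_star]
  exact (hn s hs).symm

lemma norm_mul_mem {T : Type*} [Semigroup T] [StarMul T] {S : Set T} {m n : T}
    (hm : m ∈ normalizerIn S) (hn : n ∈ normalizerIn S) : m * n ∈ normalizerIn S := by
  intro s hs
  have h1 := (hm _ (hn s hs).1).1
  have h2 := (hn _ (hm s hs).2).2
  simp only [star_mul, mul_assoc] at *
  exact ⟨h1, h2⟩

lemma mult_sub_norm {m : R} (hm : m ∈ multSub K) : m ∈ normalizerIn (K : Set R) := by
  have hs : star m ∈ multSub K := star_mem hm
  intro s hk
  exact ⟨(hs _ (hm s hk).1).2, (hm _ (hs s hk).1).2⟩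

lemma sub_mult {m : R} (hm : m ∈ K) : m ∈ multSub K :=
  fun _ hk => ⟨mul_mem hm hk, mul_mem hk hm⟩

variable (hK : IsClosed (K : Set R)) (I : Set R)
  (hIl : ∀ r, ∀ a ∈ I, r * a ∈ I) (hIs : ∀ a ∈ I, star a ∈ I)
  (hKI : ∀ a ∈ K, a ∈ I)
  (hap : ∀ a ∈ I, a ∈ closure ((fun e => e * a) '' (K : Set R)))

include hK hap in
lemma lim_mem {a : R} (ha : a ∈ I) (r : R) (h : ∀ e ∈ K, r * (e * a) ∈ K) : r * a ∈ K := by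
  have h1 : Set.MapsTo (fun x => r * x) ((fun e => e * a) '' (K : Set R)) (K : Set R) := by
    rintro _ ⟨e, he, rfl⟩
    exact h e he
  have := h1.closure (by fun_prop) (hap a ha)
  rwa [hK.closure_eq] at this

include hK hap hIs in
lemma mult_inter {m : R} (hm : m ∈ multSub K) (hmI : m ∈ I) : m ∈ K := by
  have hs : star m ∈ multSub K := star_mem hm
  have := lim_mem K hK I hap (hIs m hmI) 1 (fun e he => by
    rw [one_mul]; exact (hs e he).2)
  simpa using star_mem this

include hK hap hIl hKI in
lemma norm_conj_aux {n m : R} (hn : n ∈ normalizerIn (K : Set R)) (hm : m ∈ multSub K)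
    {k : R} (hk : k ∈ K) : n * m * star n * k ∈ K := by
  rw [mul_assoc]
  refine lim_mem K hK I hap (hIl _ _ (hKI k hk)) _ fun e he => ?_
  have : n * m * (e * (star n * k)) = (n * (m * e) * star n) * k := by simp only [mul_assoc]
  rw [this]
  exact mul_mem (hn _ (hm e he).1).1 hk

include hK hap hIl hKI in
lemma norm_conj {n m : R} (hn : n ∈ normalizerIn (K : Set R)) (hm : m ∈ multSub K) :
    n * m * star n ∈ multSub K := by
  intro k hk
  refine ⟨norm_conj_aux K hK I hIl hKI hap hn hm hk, ?_⟩
  have := star_mem (norm_conj_aux K hK I hIl hKI hap hn (star_mem hm) (star_mem hk))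
  simpa [mul_assoc] using this

include hK hap hIl hKI in
lemma norm_self {n : R} (hn : n ∈ normalizerIn (K : Set R)) :
    n * star n ∈ multSub K := by
  simpa using norm_conj K hK I hIl hKI hap hn (one_mem _)

include hK hap hIl hIs hKI in
lemma norm_mult_eq : normalizerIn (multSub K : Set R) = normalizerIn (K : Set R) := by
  have hIr : ∀ r, ∀ a ∈ I, a * r ∈ I := fun r a ha => by
    simpa using hIs _ (hIl (star r) _ (hIs a ha))
  ext n
  constructor
  · intro hn s hs
    have := hn s (sub_mult K hs)
    exact ⟨mult_inter K hK I hIs hap this.1 (hIr _ _ (hIl _ _ (hKI s hs))),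
      mult_inter K hK I hIs hap this.2 (hIr _ _ (hIl _ _ (hKI s hs)))⟩
  · intro hn s hs
    refine ⟨norm_conj K hK I hIl hKI hap hn hs, ?_⟩
    simpa using norm_conj K hK I hIl hKI hap (norm_star_mem hn) hs

include hK in
lemma mult_inv (u : Rˣ) (hu : (u : R) ∈ multSub K) : ((u⁻¹ : Rˣ) : R) ∈ multSub K := by
  have : IsClosed (multSub K : Set R) := multSub_closed K hK
  have h1 : IsUnit (⟨u, hu⟩ : multSub K) := (StarSubalgebra.coe_isUnit (multSub K)).1 u.isUnit
  obtain ⟨v, hv⟩ := h1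
  have h2 : ((v⁻¹ : (multSub K)ˣ) : multSub K).1 = ((u⁻¹ : Rˣ) : R) := by
    symm
    apply Units.inv_eq_of_mul_eq_one_right
    have := congrArg Subtype.val v.mul_inv
    rw [hv] at this
    exact this
  rw [← h2]
  exact Subtype.property _

include hK hap hIl hKI in
lemma norm_unit_inv (u : Rˣ) (hu : (u : R) ∈ normalizerIn (K : Set R)) :
    ((u⁻¹ : Rˣ) : R) ∈ normalizerIn (K : Set R) := by
  have h1 : ((u * star u : Rˣ) : R) ∈ multSub K := by
    simpa using norm_self K hK I hIl hKI hap hu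
  have h2 := mult_inv K hK _ h1
  have h3 : ((u⁻¹ : Rˣ) : R) = star (u : R) * (((u * star u)⁻¹ : Rˣ) : R) := by
    rw [← Units.coe_star, ← Units.val_mul]
    congr 1
    group
  rw [h3]
  exact norm_mul_mem (norm_star_mem hu) (mult_sub_norm K h2)

lemma cfc_bound (x : R) (g : ℝ → ℝ) (hg : Continuous g) (c : ℝ) (hc : 0 ≤ c)
    (h : ∀ t, 0 ≤ t → g t ^ 2 * t ≤ c ^ 2) : ‖cfc g (x * star x) * x‖ ≤ c := by
  have hsa : IsSelfAdjoint (x * star x) := IsSelfAdjoint.mul_star_self x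
  have e1 : (cfc g (x * star x) * x) * star (cfc g (x * star x) * x)
      = cfc (fun t => g t * t * g t) (x * star x) := by
    rw [cfc_mul (fun t => g t * t) g _ (by fun_prop) (by fun_prop),
      cfc_mul g (fun t => t) _ (by fun_prop) (by fun_prop), cfc_id' ℝ (x * star x)]
    have : star (cfc g (x * star x)) = cfc g (x * star x) :=
      (cfc_predicate g (x * star x) : IsSelfAdjoint _).star_eq
    rw [star_mul, this]
    simp only [mul_assoc]
  have e2 : ‖cfc g (x * star x) * x‖ * ‖cfc g (x * star x) * x‖ ≤ c ^ 2 := by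
    rw [← CStarRing.norm_self_mul_star, e1]
    refine norm_cfc_le (by positivity) fun t ht => ?_
    have ht0 : 0 ≤ t := by
      have := spectrum_star_mul_self_nonneg (b := star x) t (by simpa using ht)
      exact this
    have := h t ht0
    rw [Real.norm_of_nonneg (by nlinarith [mul_nonneg (sq_nonneg (g t)) ht0])]
    nlinarith
  nlinarith [norm_nonneg (cfc g (x * star x) * x)]

/-- truncated inverse fourth root -/
noncomputable def fk (d t : ℝ) : ℝ := (√√(max t d))⁻¹

lemma fk_cont {d : ℝ} (hd : 0 < d) : Continuous (fk d) := by
  unfold fk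
  refine Continuous.inv₀ (by fun_prop) fun t => ?_
  have : 0 < max t d := lt_max_of_lt_right hd
  positivity

lemma fk_nonneg (d t : ℝ) : 0 ≤ fk d t := by unfold fk; positivity

lemma fk_mul_le {d t : ℝ} (hd : 0 < d) : √√t * fk d t ≤ 1 := by
  unfold fk
  have : 0 < max t d := lt_max_of_lt_right hd
  rw [← div_eq_mul_inv, div_le_one (by positivity)]
  gcongr
  exact le_max_left _ _

lemma fk_mul_eq {d t : ℝ} (hd : 0 < d) (h : d ≤ t) : √√t * fk d t = 1 := by
  unfold fk
  have : 0 < t := hd.trans_le h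
  rw [max_eq_left h, mul_inv_cancel₀ (by positivity)]

lemma fk_sub_bound {D d e t : ℝ} (hd : 0 < d) (he : 0 < e) (hdD : d ≤ D) (heD : e ≤ D)
    (ht : 0 ≤ t) : (fk d t - fk e t) ^ 2 * t ≤ (√√D) ^ 2 := by
  rw [Real.sq_sqrt (Real.sqrt_nonneg _)]
  rcases le_total D t with h | h
  · have : fk d t = fk e t := by
      unfold fk; rw [max_eq_left (hdD.trans h), max_eq_left (heD.trans h)]
    rw [this]; simp
  · have h1 : ((fk d t - fk e t) * √√t) ^ 2 ≤ 1 := by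
      have a1 := fk_mul_le (t := t) hd
      have a2 := fk_mul_le (t := t) he
      have b1 := mul_nonneg (Real.sqrt_nonneg (√t)) (fk_nonneg d t)
      have b2 := mul_nonneg (Real.sqrt_nonneg (√t)) (fk_nonneg e t)
      rw [sq_le_one_iff_abs_le_one, abs_le]
      constructor <;> nlinarith
    have h2 : (fk d t - fk e t) ^ 2 * t = ((fk d t - fk e t) * √√t) ^ 2 * √t := by
      rw [mul_pow, Real.sq_sqrt (Real.sqrt_nonneg _), mul_assoc, Real.mul_self_sqrt ht]
    rw [h2]
    calc _ ≤ 1 * √t := by gcongr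
      _ ≤ √D := by rw [one_mul]; gcongr

lemma fk_one_bound {d t : ℝ} (hd : 0 < d) (ht : 0 ≤ t) :
    (√√t * fk d t - 1) ^ 2 * t ≤ (√d) ^ 2 := by
  rw [Real.sq_sqrt hd.le]
  rcases le_total d t with h | h
  · rw [fk_mul_eq hd h]; simpa using hd.le
  · have a1 := fk_mul_le (t := t) hd
    have b1 := mul_nonneg (Real.sqrt_nonneg (√t)) (fk_nonneg d t)
    calc _ ≤ 1 * t := by
            gcongr
            rw [sq_le_one_iff_abs_le_one, abs_le]
            constructor <;> linarith
      _ ≤ d := by linarith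

include hK hap hIl hIs hKI in
open Filter Topology in
lemma norm_factor (hI : IsClosed I) {x : R} (hx : x ∈ normalizerIn (K : Set R)) (hxI : x ∈ I) :
    ∃ a ∈ K, ∃ w ∈ normalizerIn (K : Set R), w ∈ I ∧ x = a * w := by
  have hsa : IsSelfAdjoint (x * star x) := IsSelfAdjoint.mul_star_self x
  have hM : x * star x ∈ multSub K := norm_self K hK I hIl hKI hap hx
  have hhK : x * star x ∈ K := mult_inter K hK I hIs hap hM (hIl _ _ (hIs _ hxI))
  have hMc : IsClosed (multSub K : Set R) := multSub_closed K hK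
  have hg : Continuous (fun t : ℝ => √√t) := by fun_prop
  have hgK : cfc (fun t : ℝ => √√t) (x * star x) ∈ K := by
    rw [← cfcₙ_eq_cfc (hf0 := by simp)]
    exact cfcₙ_mem _ hhK
  let d : ℕ → ℝ := fun k => 1 / ((k : ℝ) + 1)
  have hd : ∀ k, 0 < d k := fun k => by positivity
  have hd0 : Tendsto d atTop (𝓝 0) := tendsto_one_div_add_atTop_nhds_zero_nat
  have hanti : ∀ n N, N ≤ n → d n ≤ d N := fun n N h => by
    simp only [d]; gcongr
  let w : ℕ → R := fun k => cfc (fk (d k)) (x * star x) * x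
  have hwI : ∀ k, w k ∈ I := fun k => hIl _ _ hxI
  have hwN : ∀ k, w k ∈ normalizerIn (K : Set R) := fun k =>
    norm_mul_mem (mult_sub_norm K (cfc_mem _ hM)) hx
  have hcauchy : CauchySeq w := by
    refine cauchySeq_of_le_tendsto_0 (fun N => √√(d N)) ?_ ?_
    · intro n m N hn hm
      rw [dist_eq_norm]
      have : w n - w m = cfc (fun t => fk (d n) t - fk (d m) t) (x * star x) * x := by
        rw [cfc_sub _ _ _ (fk_cont (hd n)).continuousOn (fk_cont (hd m)).continuousOn, sub_mul]
      rw [this]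
      exact cfc_bound x _ ((fk_cont (hd n)).sub (fk_cont (hd m))) _ (Real.sqrt_nonneg _)
        fun t ht => fk_sub_bound (hd n) (hd m) (hanti _ _ hn) (hanti _ _ hm) ht
    · simpa [Function.comp_def] using (hg.tendsto 0).comp hd0
  obtain ⟨v, hv⟩ := cauchySeq_tendsto_of_complete hcauchy
  refine ⟨_, hgK, v, (norm_closed K hK).mem_of_tendsto hv (.of_forall hwN),
    hI.mem_of_tendsto hv (.of_forall hwI), ?_⟩
  refine tendsto_nhds_unique (f := fun k => cfc (fun t : ℝ => √√t) (x * star x) * w k)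
    (l := atTop) ?_ (tendsto_const_nhds.mul hv)
  rw [tendsto_iff_norm_sub_tendsto_zero]
  refine squeeze_zero (fun _ => norm_nonneg _) (g := fun k => √(d k)) (fun k => ?_) ?_
  · have : cfc (fun t : ℝ => √√t) (x * star x) * w k - x
        = cfc (fun t => √√t * fk (d k) t - 1) (x * star x) * x := by
      rw [cfc_sub (fun t => √√t * fk (d k) t) (fun _ => 1) _
          (hg.mul (fk_cont (hd k))).continuousOn continuous_const.continuousOn,
        cfc_mul _ _ _ hg.continuousOn (fk_cont (hd k)).continuousOn, cfc_const_one ℝ (x * star x),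
        sub_mul, one_mul, mul_assoc]
    rw [this]
    exact cfc_bound x _ ((hg.mul (fk_cont (hd k))).sub continuous_const) _ (Real.sqrt_nonneg _)
      fun t ht => fk_one_bound (hd k) ht
  · simpa [Function.comp_def] using (Real.continuous_sqrt.tendsto 0).comp hd0

include hK hap hIl hIs hKI in
lemma norm_factor2 (hI : IsClosed I) {x : R} (hx : x ∈ normalizerIn (K : Set R)) (hxI : x ∈ I) :
    ∃ a ∈ K, ∃ w ∈ normalizerIn (K : Set R), w ∈ I ∧ ∃ c ∈ K, x = a * w * c := by
  obtain ⟨a, ha, w, hw, hwI, rfl⟩ := norm_factor K hK I hIl hIs hKI hap hI hx hxI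
  obtain ⟨c, hc, v, hv, hvI, h⟩ :=
    norm_factor K hK I hIl hIs hKI hap hI (norm_star_mem hw) (hIs _ hwI)
  refine ⟨a, ha, star v, norm_star_mem hv, hIs _ hvI, star c, star_mem hc, ?_⟩
  rw [mul_assoc, ← star_mul, ← h, star_star]

end Abstract

section ApproxUnit

open Filter Topology

lemma approx_mem {A : Type*} [NonUnitalCStarAlgebra A]
    (B : NonUnitalStarSubalgebra ℂ A) (hB : IsClosed (B : Set A))
    (hnd : NondegSet (B : Set A)) (a : A) : a ∈ closure ((fun e => e * a) '' (B : Set A)) := by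
  let _ : PartialOrder B := CStarAlgebra.spectralOrder B
  have : StarOrderedRing B := CStarAlgebra.spectralOrderedRing B
  have hl := CStarAlgebra.increasingApproximateUnit B
  set l := CStarAlgebra.approximateUnit B
  have key : ∀ a : A, Tendsto (fun e : B => (e : A) * a) l (𝓝 a) := by
    have hspan : ∀ x ∈ Submodule.span ℂ {x : A | ∃ b ∈ (B : Set A), ∃ a : A, x = b * a},
        Tendsto (fun e : B => (e : A) * x) l (𝓝 x) := by
      intro x hx
      induction hx using Submodule.span_induction with
      | mem x h =>
        obtain ⟨b, hb, y, rfl⟩ := h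
        have h1 := hl.tendsto_mul_right ⟨b, hb⟩
        have h2 := (continuous_subtype_val.tendsto _).comp h1
        have h3 := h2.mul_const y
        simpa [Function.comp_def, mul_assoc] using h3
      | zero => simp
      | add x y _ _ hx hy => simpa [mul_add] using hx.add hy
      | smul c x _ hx => simpa [mul_smul_comm] using hx.const_smul c
    intro a
    rw [Metric.tendsto_nhds]
    intro ε hε
    have ha : a ∈ closure (Submodule.span ℂ
      {x : A | ∃ b ∈ (B : Set A), ∃ a : A, x = b * a} : Set A) := by
      rw [hnd]; trivial
    obtain ⟨x, hx, hxa⟩ := Metric.mem_closure_iff.1 ha (ε / 3) (by positivity)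
    have := Metric.tendsto_nhds.1 (hspan x hx) (ε / 3) (by positivity)
    filter_upwards [this, hl.eventually_norm] with e he hen
    rw [dist_eq_norm] at *
    have e1 : (e : A) * a - a = (e : A) * (a - x) + ((e : A) * x - x) - (a - x) := by
      rw [mul_sub]; abel
    have e2 : ‖(e : A) * (a - x)‖ ≤ ‖a - x‖ := by
      refine (norm_mul_le _ _).trans ?_
      have : ‖(e : A)‖ ≤ 1 := hen
      nlinarith [norm_nonneg (a - x)]
    rw [e1]
    calc _ ≤ ‖(e : A) * (a - x) + ((e : A) * x - x)‖ + ‖a - x‖ := norm_sub_le _ _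
      _ ≤ ‖(e : A) * (a - x)‖ + ‖(e : A) * x - x‖ + ‖a - x‖ := by gcongr; exact norm_add_le _ _
      _ < ε := by linarith
  have : l.NeBot := hl.neBot
  exact mem_closure_of_tendsto (key a) (.of_forall fun e => ⟨e, e.2, rfl⟩)

end ApproxUnit

section Embedding

variable {A : Type*} [NonUnitalCStarAlgebra A]

lemma kA_mul_left (m : 𝓜(ℂ, A)) (a : A) : m * kA A a = kA A (m.fst a) := by
  refine DoubleCentralizer.ext _ _ _ _ (Prod.ext ?_ ?_)
  · refine ContinuousLinearMap.ext fun y => ?_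
    change m.fst (a * y) = m.fst a * y
    have : ∀ z, z * (m.fst (a * y) - m.fst a * y) = 0 := fun z => by
      rw [mul_sub, ← m.central, ← mul_assoc, ← mul_assoc, ← m.central, sub_self]
    have h := CStarRing.star_mul_self_eq_zero_iff (m.fst (a * y) - m.fst a * y) |>.1 (this _)
    exact sub_eq_zero.1 h
  · refine ContinuousLinearMap.ext fun y => ?_
    exact m.central y a

lemma kA_isometry : Isometry (kA A) := by
  refine AddMonoidHomClass.isometry_of_norm (kA A) fun a => ?_
  rw [← DoubleCentralizer.norm_fst]
  exact ContinuousLinearMap.opNorm_mul_apply ℂ A a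

end Embedding

/-- Properties of normalizers in the multiplier algebra of a
non-degenerate C*-inclusion `B ⊆ A`. -/
theorem stmt14 {A : Type*} [NonUnitalCStarAlgebra A]
    (B : NonUnitalStarSubalgebra ℂ A) (hBclosed : IsClosed (B : Set A))
    (hnd : NondegSet (B : Set A)) :
    -- (i) `N_{M(A)}(B)` is a norm-closed unital *-subsemigroup, stable under inversion :
    (IsClosed (NM (B : Set A)) ∧
      (1 : 𝓜(ℂ, A)) ∈ NM (B : Set A) ∧
      (∀ m ∈ NM (B : Set A), ∀ n ∈ NM (B : Set A), m * n ∈ NM (B : Set A)) ∧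
      (∀ n ∈ NM (B : Set A), star n ∈ NM (B : Set A)) ∧
      (∀ u : (𝓜(ℂ, A))ˣ, (u : 𝓜(ℂ, A)) ∈ NM (B : Set A) →
        ((u⁻¹ : (𝓜(ℂ, A))ˣ) : 𝓜(ℂ, A)) ∈ NM (B : Set A))) ∧
    -- (ii) `N_A(B) = N_{M(A)}(B) ∩ A = B ⬝ N_{M(A)}(B) ⬝ B = B ⬝ N_A(B) ⬝ B` :
    (kA A '' normalizerIn (B : Set A) = NM (B : Set A) ∩ Set.range (kA A) ∧
      kA A '' normalizerIn (B : Set A) =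
        {x : 𝓜(ℂ, A) | ∃ b₁ ∈ (B : Set A), ∃ n ∈ NM (B : Set A), ∃ b₂ ∈ (B : Set A),
          x = kA A b₁ * n * kA A b₂} ∧
      normalizerIn (B : Set A) =
        {x : A | ∃ b₁ ∈ (B : Set A), ∃ n ∈ normalizerIn (B : Set A), ∃ b₂ ∈ (B : Set A),
          x = b₁ * n * b₂}) ∧
    -- (iii) `N_{M(A)}(M(B)) = N_{M(A)}(B)`; in particular `n n*, n* n ∈ M(B)` :
    (normalizerIn (MB (B : Set A)) = NM (B : Set A) ∧
      ∀ n ∈ NM (B : Set A), n * star n ∈ MB (B : Set A) ∧ star n * n ∈ MB (B : Set A)) := by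
  have hiso : Isometry (kA A) := kA_isometry
  have hinj : Function.Injective (kA A) := hiso.injective
  let K : NonUnitalStarSubalgebra ℂ 𝓜(ℂ, A) := B.map (kA A)
  have hKc : (K : Set 𝓜(ℂ, A)) = kA A '' (B : Set A) := NonUnitalStarSubalgebra.coe_map _ _
  have hemb : Topology.IsClosedEmbedding (kA A) := hiso.isClosedEmbedding
  have hK : IsClosed (K : Set 𝓜(ℂ, A)) := by
    rw [hKc]; exact hemb.isClosedMap _ hBclosed
  have hI : IsClosed (Set.range (kA A)) := hemb.isClosed_range
  have hIl : ∀ r, ∀ a ∈ Set.range (kA A), r * a ∈ Set.range (kA A) := by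
    rintro r _ ⟨a, rfl⟩
    exact ⟨_, (kA_mul_left r a).symm⟩
  have hIs : ∀ a ∈ Set.range (kA A), star a ∈ Set.range (kA A) := by
    rintro _ ⟨a, rfl⟩
    exact ⟨star a, map_star _ _⟩
  have hmemK : ∀ x, x ∈ K ↔ x ∈ kA A '' (B : Set A) := fun x => by
    rw [← hKc]; rfl
  have hKI : ∀ a ∈ K, a ∈ Set.range (kA A) := fun a ha =>
    Set.image_subset_range _ _ ((hmemK a).1 ha)
  have hap : ∀ a ∈ Set.range (kA A), a ∈ closure ((fun e => e * a) '' (K : Set 𝓜(ℂ, A))) := by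
    rintro _ ⟨a, rfl⟩
    have h1 : Set.MapsTo (kA A) ((fun e => e * a) '' (B : Set A))
        ((fun e => e * kA A a) '' (K : Set 𝓜(ℂ, A))) := by
      rintro _ ⟨e, he, rfl⟩
      exact ⟨kA A e, (hmemK _).2 ⟨e, he, rfl⟩, (map_mul _ _ _).symm⟩
    exact h1.closure hiso.continuous (approx_mem B hBclosed hnd a)
  have hNM : NM (B : Set A) = normalizerIn (K : Set 𝓜(ℂ, A)) := by rw [hKc]; rfl
  have hMB : MB (B : Set A) = (multSub K : Set 𝓜(ℂ, A)) := by
    ext m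
    constructor
    · intro hm k hk
      obtain ⟨b, hb, rfl⟩ := (hmemK k).1 hk
      exact ⟨(hmemK _).2 (hm b hb).1, (hmemK _).2 (hm b hb).2⟩
    · intro hm b hb
      have := hm (kA A b) ((hmemK _).2 ⟨b, hb, rfl⟩)
      exact ⟨(hmemK _).1 this.1, (hmemK _).1 this.2⟩
  have hNA : ∀ n : A, n ∈ normalizerIn (B : Set A) ↔ kA A n ∈ NM (B : Set A) := by
    intro n
    constructor
    · rintro hn _ ⟨b, hb, rfl⟩
      simp only [← map_star, ← map_mul]
      exact ⟨⟨_, (hn b hb).1, rfl⟩, ⟨_, (hn b hb).2, rfl⟩⟩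
    · intro hn b hb
      have := hn (kA A b) ⟨b, hb, rfl⟩
      simp only [← map_star, ← map_mul] at this
      exact ⟨(hinj.mem_set_image).1 this.1, (hinj.mem_set_image).1 this.2⟩
  have hBN : ∀ b ∈ (B : Set A), kA A b ∈ NM (B : Set A) := fun b hb => by
    rw [hNM]; exact mult_sub_norm K (sub_mult K ((hmemK _).2 ⟨b, hb, rfl⟩))
  have hfac : ∀ n ∈ normalizerIn (B : Set A), ∃ b₁ ∈ (B : Set A),
      ∃ m ∈ normalizerIn (B : Set A), ∃ b₂ ∈ (B : Set A), n = b₁ * m * b₂ := by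
    intro n hn
    have h1 := (hNA n).1 hn
    rw [hNM] at h1
    obtain ⟨a, ha, w, hw, ⟨v, rfl⟩, c, hc, h⟩ :=
      norm_factor2 K hK _ hIl hIs hKI hap hI h1 ⟨n, rfl⟩
    obtain ⟨b₁, hb₁, rfl⟩ := (hmemK _).1 ha
    obtain ⟨b₂, hb₂, rfl⟩ := (hmemK _).1 hc
    refine ⟨b₁, hb₁, v, (hNA v).2 (by rw [hNM]; exact hw), b₂, hb₂, hinj ?_⟩
    rw [h, map_mul, map_mul]
  refine ⟨⟨?_, ?_, ?_, ?_, ?_⟩, ⟨?_, ?_, ?_⟩, ?_, ?_⟩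
  · rw [hNM]; exact norm_closed K hK
  · rw [hNM]; exact mult_sub_norm K (one_mem _)
  · exact fun m hm n hn => norm_mul_mem hm hn
  · exact fun n hn => norm_star_mem hn
  · rw [hNM]; exact fun u hu => norm_unit_inv K hK _ hIl hKI hap u hu
  · ext x
    constructor
    · rintro ⟨n, hn, rfl⟩
      exact ⟨(hNA n).1 hn, n, rfl⟩
    · rintro ⟨hx, n, rfl⟩
      exact ⟨n, (hNA n).2 hx, rfl⟩
  · ext x
    constructor
    · rintro ⟨n, hn, rfl⟩
      obtain ⟨b₁, hb₁, v, hv, b₂, hb₂, rfl⟩ := hfac n hn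
      exact ⟨b₁, hb₁, kA A v, (hNA v).1 hv, b₂, hb₂, by rw [map_mul, map_mul]⟩
    · rintro ⟨b₁, hb₁, n, hn, b₂, hb₂, rfl⟩
      have h1 := norm_mul_mem (norm_mul_mem (hBN b₁ hb₁) hn) (hBN b₂ hb₂)
      obtain ⟨y, hy⟩ := hIl (kA A b₁ * n) _ ⟨b₂, rfl⟩
      rw [← hy]
      refine ⟨y, (hNA y).2 ?_, rfl⟩
      rw [hy]; exact h1
  · ext x
    constructor
    · exact hfac x
    · rintro ⟨b₁, hb₁, n, hn, b₂, hb₂, rfl⟩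
      exact norm_mul_mem (norm_mul_mem ((hNA _).2 (hBN b₁ hb₁)) hn) ((hNA _).2 (hBN b₂ hb₂))
  · rw [hMB, hNM]; exact norm_mult_eq K hK _ hIl hIs hKI hap
  · rw [hMB, hNM]
    intro n hn
    refine ⟨norm_self K hK _ hIl hKI hap hn, ?_⟩
    simpa using norm_self K hK _ hIl hKI hap (norm_star_mem hn)
end

section
/- Let B ⊆ A be a non-degenerate C*-inclusion and J a proper closed two-sided ideal of B such that the set N_A(B) ∩ N_A(J) generates A^reg as a C*-subalgebra of A. Then L, the closed linear span of {a₁ x a₂ : x ∈ J, a₁, a₂ ∈ A^reg}, is a proper closed two-sided ideal of A^reg. -/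
/-- `A^reg`: the C*-subalgebra of `A` generated by the normalizers `N_A(B)`. -/
def ARegSet {A : Type*} [NonUnitalCStarAlgebra A] (Bs : Set A) : Set A :=
  closure (NonUnitalStarAlgebra.adjoin ℂ (normalizerIn Bs) : Set A)

/-- `J` is a closed two-sided ideal of (the C*-subalgebra with underlying set) `Bs`. -/
def IsClosedIdealOf {A : Type*} [NonUnitalCStarAlgebra A] (J Bs : Set A) : Prop :=
  J ⊆ Bs ∧ IsClosed J ∧ (0 : A) ∈ J ∧
  (∀ x ∈ J, ∀ y ∈ J, x + y ∈ J) ∧ (∀ c : ℂ, ∀ x ∈ J, c • x ∈ J) ∧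
  (∀ x ∈ J, ∀ b ∈ Bs, b * x ∈ J ∧ x * b ∈ J)

/-- The closed linear span of `{a₁ x a₂ : x ∈ J, a₁, a₂ ∈ R}`. -/
def inducedIdeal {A : Type*} [NonUnitalCStarAlgebra A] (J R : Set A) : Set A :=
  closure (Submodule.span ℂ
    {x : A | ∃ j ∈ J, ∃ a₁ ∈ R, ∃ a₂ ∈ R, x = a₁ * j * a₂} : Set A)

open Filter Topology in
/-- A closed ideal `J` of `B` has a left approximate unit that also works for every `x : A`
with `x x* ∈ J`. -/
lemma exists_approx {A : Type*} [NonUnitalCStarAlgebra A]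
    (B : NonUnitalStarSubalgebra ℂ A) (J : Set A) (hJ : IsClosedIdealOf J (B : Set A)) :
    ∃ l : Filter A, l.NeBot ∧ (∀ᶠ u in l, u ∈ J ∧ ‖u‖ ≤ 1) ∧
      ∀ x : A, x * star x ∈ J → Tendsto (fun u => u * x) l (𝓝 x) := by
  obtain ⟨hJB, hJc, hJ0, hJadd, hJsmul, hJmul⟩ := hJ
  let J0 : NonUnitalStarSubalgebra ℂ A :=
    { carrier := {x | x ∈ J ∧ star x ∈ J}
      add_mem' := by
        rintro a b ⟨ha, ha'⟩ ⟨hb, hb'⟩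
        exact ⟨hJadd _ ha _ hb, by rw [star_add]; exact hJadd _ ha' _ hb'⟩
      zero_mem' := ⟨hJ0, by simpa using hJ0⟩
      mul_mem' := by
        rintro a b ⟨ha, ha'⟩ ⟨hb, hb'⟩
        exact ⟨(hJmul _ hb _ (hJB ha)).1, by rw [star_mul]; exact (hJmul _ ha' _ (hJB hb')).1⟩
      smul_mem' := by
        rintro c a ⟨ha, ha'⟩
        exact ⟨hJsmul _ _ ha, by rw [star_smul]; exact hJsmul _ _ ha'⟩
      star_mem' := by
        rintro a ⟨ha, ha'⟩
        exact ⟨ha', by simpa using ha⟩ }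
  have hc : IsClosed (J0 : Set A) := hJc.inter (hJc.preimage continuous_star)
  haveI := hc
  letI : PartialOrder J0 := CStarAlgebra.spectralOrder J0
  haveI : StarOrderedRing J0 := CStarAlgebra.spectralOrderedRing J0
  have hl := CStarAlgebra.increasingApproximateUnit J0
  have hne := hl.neBot
  refine ⟨(CStarAlgebra.approximateUnit J0).map Subtype.val, inferInstance, ?_, ?_⟩
  · rw [eventually_map]
    filter_upwards [hl.eventually_norm] with u hu
    exact ⟨u.2.1, hu⟩
  · intro x hx
    rw [tendsto_map'_iff]
    have hx0 : x * star x ∈ J0 := ⟨hx, by simpa using hx⟩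
    have h1 := hl.tendsto_mul_right ⟨x * star x, hx0⟩
    have h2 : Tendsto (fun u : J0 => (u : A) * (x * star x) - x * star x)
        (CStarAlgebra.approximateUnit J0) (𝓝 0) := by
      have := (continuous_subtype_val.tendsto _).comp h1
      rw [← sub_self (x * star x)]
      exact Tendsto.sub_const this _
    have h3 : Tendsto (fun u : J0 => 2 * ‖(u : A) * (x * star x) - x * star x‖)
        (CStarAlgebra.approximateUnit J0) (𝓝 0) := by
      simpa using h2.norm.const_mul 2
    rw [tendsto_iff_norm_sub_tendsto_zero]
    have h4 : Tendsto (fun u : J0 => ‖(u : A) * x - x‖ ^ 2)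
        (CStarAlgebra.approximateUnit J0) (𝓝 0) := by
      refine tendsto_of_tendsto_of_tendsto_of_le_of_le' tendsto_const_nhds h3
        (Eventually.of_forall fun u => by positivity) ?_
      filter_upwards [hl.eventually_norm] with u hu
      have hu' : ‖(u : A)‖ ≤ 1 := hu
      have e : ((u : A) * x - x) * star ((u : A) * x - x) =
          ((u : A) * (x * star x) - x * star x) * star (u : A) -
            ((u : A) * (x * star x) - x * star x) := by
        simp only [star_sub, star_mul]
        noncomm_ring
      rw [sq, ← CStarRing.norm_self_mul_star, e]
      refine (norm_sub_le _ _).trans ?_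
      have := norm_mul_le ((u : A) * (x * star x) - x * star x) (star (u : A))
      rw [norm_star] at this
      nlinarith [norm_nonneg ((u : A) * (x * star x) - x * star x)]
    have h5 := h4.sqrt
    simpa [Function.comp_def] using h5

/-- The star algebra generated by a self-adjoint multiplicative set is its span. -/
lemma adjoin_sub_span {A : Type*} [NonUnitalCStarAlgebra A] (N : Set A)
    (hm : ∀ x ∈ N, ∀ y ∈ N, x * y ∈ N) (hs : ∀ x ∈ N, star x ∈ N) (a : A)
    (ha : a ∈ NonUnitalStarAlgebra.adjoin ℂ N) : a ∈ Submodule.span ℂ N := by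
  induction ha using NonUnitalStarAlgebra.adjoin_induction with
  | mem x hx => exact Submodule.subset_span hx
  | add x y _ _ hx hy => exact add_mem hx hy
  | zero => exact zero_mem _
  | mul x y _ _ hx hy =>
    have h1 : ∀ z ∈ N, z * y ∈ Submodule.span ℂ N := by
      intro z hz
      refine (Submodule.span_le (p := (Submodule.span ℂ N).comap (LinearMap.mulLeft ℂ z))).2 ?_ hy
      intro w hw
      exact Submodule.subset_span (hm _ hz _ hw)
    exact (Submodule.span_le (p := (Submodule.span ℂ N).comap (LinearMap.mulRight ℂ y))).2 h1 hx
  | smul c x _ hx => exact Submodule.smul_mem _ _ hx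
  | star x hx' hx =>
    clear hx'
    induction hx using Submodule.span_induction with
    | mem x hx => exact Submodule.subset_span (hs _ hx)
    | zero => simp
    | add x y _ _ hx hy => rw [star_add]; exact add_mem hx hy
    | smul c x _ hx => rw [star_smul]; exact Submodule.smul_mem _ _ hx

lemma normalizer_mul {A : Type*} [NonUnitalCStarAlgebra A] (S : Set A) {x y : A}
    (hx : x ∈ normalizerIn S) (hy : y ∈ normalizerIn S) : x * y ∈ normalizerIn S := by
  intro s hs
  constructor
  · have := (hx _ (hy s hs).1).1
    simpa [mul_assoc] using this
  · have := (hy _ (hx s hs).2).2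
    simpa [mul_assoc] using this

lemma normalizer_star {A : Type*} [NonUnitalCStarAlgebra A] (S : Set A) {x : A}
    (hx : x ∈ normalizerIn S) : star x ∈ normalizerIn S := by
  intro s hs
  exact ⟨by simpa using (hx s hs).2, by simpa using (hx s hs).1⟩

open Filter Topology in
/-- The closed subspace of elements on which the approximate unit acts as a left unit. -/
lemma exists_V {A : Type*} [NonUnitalCStarAlgebra A] (l : Filter A)
    (hl : ∀ᶠ u in l, ‖u‖ ≤ 1) :
    ∃ V : Submodule ℂ A, IsClosed (V : Set A) ∧
      ∀ y, y ∈ V ↔ Tendsto (fun u => u * y) l (𝓝 y) := by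
  refine ⟨{ carrier := {y | Tendsto (fun u => u * y) l (𝓝 y)}
            add_mem' := ?_
            zero_mem' := by simpa using tendsto_const_nhds
            smul_mem' := ?_ }, ?_, fun y => Iff.rfl⟩
  · intro a b ha hb
    simp only [Set.mem_ofPred_eq, mul_add] at *
    exact ha.add hb
  · intro c a ha
    simp only [Set.mem_ofPred_eq, mul_smul_comm] at *
    exact ha.const_smul c
  · rw [← closure_subset_iff_isClosed]
    intro y hy
    change Tendsto (fun u => u * y) l (𝓝 y)
    rw [Metric.tendsto_nhds]
    intro ε hε
    obtain ⟨z, hz, hyz⟩ := Metric.mem_closure_iff.1 hy (ε / 3) (by positivity)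
    have hz' : Tendsto (fun u => u * z) l (𝓝 z) := hz
    rw [Metric.tendsto_nhds] at hz'
    filter_upwards [hl, hz' (ε / 3) (by positivity)] with u hu huz
    rw [dist_eq_norm] at *
    have e : u * y - y = u * (y - z) + (u * z - z) - (y - z) := by noncomm_ring
    rw [e]
    have h1 := norm_sub_le (u * (y - z) + (u * z - z)) (y - z)
    have h2 := norm_add_le (u * (y - z)) (u * z - z)
    have h3 := norm_mul_le u (y - z)
    nlinarith [norm_nonneg (y - z)]

/-- If `J ⊲ B` is a proper closed two-sided ideal such that
`N_A(B) ∩ N_A(J)` generates `A^reg`, then the closed span of `{a₁ x a₂ : x ∈ J, a₁, a₂ ∈ A^reg}`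
is a proper closed two-sided ideal of `A^reg`. -/
theorem stmt16 {A : Type*} [NonUnitalCStarAlgebra A]
    (B : NonUnitalStarSubalgebra ℂ A) (hBclosed : IsClosed (B : Set A))
    (hnd : NondegSet (B : Set A))
    (J : Set A) (hJ : IsClosedIdealOf J (B : Set A)) (hJproper : J ≠ (B : Set A))
    (hgen : closure (NonUnitalStarAlgebra.adjoin ℂ
        (normalizerIn (B : Set A) ∩ normalizerIn J) : Set A) = ARegSet (B : Set A)) :
    IsClosedIdealOf (inducedIdeal J (ARegSet (B : Set A))) (ARegSet (B : Set A)) ∧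
    inducedIdeal J (ARegSet (B : Set A)) ≠ ARegSet (B : Set A) := by
  have hJ' := hJ
  obtain ⟨hJB, hJc, hJ0, hJadd, hJsmul, hJmul⟩ := hJ
  set R : NonUnitalStarSubalgebra ℂ A :=
    (NonUnitalStarAlgebra.adjoin ℂ (normalizerIn (B : Set A))).topologicalClosure with hR
  have hRset : ARegSet (B : Set A) = (R : Set A) := rfl
  have hRc : IsClosed (R : Set A) := isClosed_closure
  have hBN : ∀ b ∈ B, b ∈ normalizerIn (B : Set A) := fun b hb s hs =>
    ⟨mul_mem (mul_mem hb hs) (star_mem hb), mul_mem (mul_mem (star_mem hb) hs) hb⟩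
  have hBR : ∀ b ∈ B, b ∈ R := fun b hb =>
    subset_closure (NonUnitalStarAlgebra.subset_adjoin ℂ _ (hBN b hb))
  rw [hRset] at hgen ⊢
  set G : Set A := {x : A | ∃ j ∈ J, ∃ a₁ ∈ (R : Set A), ∃ a₂ ∈ (R : Set A), x = a₁ * j * a₂}
    with hG
  set L : Submodule ℂ A := (Submodule.span ℂ G).topologicalClosure with hL
  have hLset : inducedIdeal J (R : Set A) = (L : Set A) := rfl
  have hLc : IsClosed (L : Set A) := isClosed_closure
  have hGL : ∀ x ∈ G, x ∈ L := fun x hx => subset_closure (Submodule.subset_span hx)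
  -- minimality of `L`
  have hmin : ∀ V : Submodule ℂ A, IsClosed (V : Set A) → (∀ x ∈ G, x ∈ V) → L ≤ V :=
    fun V hV h => Submodule.topologicalClosure_minimal _ (Submodule.span_le.2 h) hV
  rw [hLset]
  refine ⟨⟨?_, hLc, zero_mem L, fun x hx y hy => add_mem hx hy,
    fun c x hx => L.smul_mem c hx, ?_⟩, ?_⟩
  · refine hmin R.toSubmodule hRc ?_
    rintro _ ⟨j, hj, a₁, h₁, a₂, h₂, rfl⟩
    exact R.mul_mem (R.mul_mem h₁ (hBR _ (hJB hj))) h₂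
  · intro x hx b hb
    constructor
    · refine hmin (L.comap (LinearMap.mulLeft ℂ b))
        (hLc.preimage (continuous_const_mul b)) ?_ hx
      rintro _ ⟨j, hj, a₁, h₁, a₂, h₂, rfl⟩
      exact hGL _ ⟨j, hj, b * a₁, R.mul_mem hb h₁, a₂, h₂, by simp [mul_assoc]⟩
    · refine hmin (L.comap (LinearMap.mulRight ℂ b))
        (hLc.preimage (continuous_mul_const b)) ?_ hx
      rintro _ ⟨j, hj, a₁, h₁, a₂, h₂, rfl⟩
      exact hGL _ ⟨j, hj, a₁, h₁, a₂ * b, R.mul_mem h₂ hb, by simp [mul_assoc]⟩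
  · intro hLR
    obtain ⟨l, hne, hlJ, hlx⟩ := exists_approx B J hJ'
    obtain ⟨V, hVc, hV⟩ := exists_V l (hlJ.mono fun u hu => hu.2)
    have hVmul : ∀ y ∈ V, ∀ a : A, y * a ∈ V := by
      intro y hy a
      rw [hV] at *
      simpa [mul_assoc] using hy.mul_const a
    -- `a * j ∈ V` for all `a` in `A^reg`
    have hRV : ∀ j ∈ J, ∀ a ∈ R, a * j ∈ V := by
      intro j hj a ha
      have ha' : a ∈ (R : Set A) := ha
      rw [← hgen] at ha'
      refine closure_minimal (t := (V.comap (LinearMap.mulRight ℂ j) : Submodule ℂ A)) ?_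
        (hVc.preimage (continuous_mul_const j)) ha'
      intro c hc
      have hc' := adjoin_sub_span (normalizerIn (B : Set A) ∩ normalizerIn J)
        (fun x hx y hy => ⟨normalizer_mul _ hx.1 hy.1, normalizer_mul _ hx.2 hy.2⟩)
        (fun x hx => ⟨normalizer_star _ hx.1, normalizer_star _ hx.2⟩) c hc
      refine (Submodule.span_le.2 ?_) hc'
      intro n hn
      change n * j ∈ V
      rw [hV]
      apply hlx
      have hjj : j * star j ∈ J := (hJmul _ hj _ (star_mem (hJB hj))).2
      have := (hn.2 _ hjj).1
      simpa [mul_assoc] using this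
    have hLV : L ≤ V := by
      refine hmin V hVc ?_
      rintro _ ⟨j, hj, a₁, h₁, a₂, h₂, rfl⟩
      exact hVmul _ (hRV j hj a₁ h₁) a₂
    apply hJproper
    refine Set.Subset.antisymm hJB ?_
    intro b hb
    have hbL : b ∈ (L : Set A) := hLR ▸ hBR b hb
    have hbV := (hV b).1 (hLV hbL)
    exact hJc.mem_of_tendsto hbV (hlJ.mono fun u hu => (hJmul u hu.1 b hb).2)
end
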